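/- arXiv:2503.10132 — 8 statements merged into one kernel-verified Lean document; each statement's English description precedes it below -/
import Mathlib

section
/- For every integer n ≥ 3 there exists a unique real number p ∈ (0,1) such that (1-p)^{n-1} + p^{n-1}/n = 1/n. -/
/-!
Write `n = k + 3`. Since `1 - p ^ (k + 2) = (1 - p) * ∑ i < k + 2, p ^ i`, cancelling the factor
`1 - p ≠ 0` turns the equation, for `p < 1`, into `∑ i < k + 2, p ^ i = n * (1 - p) ^ (k + 1)`.
On `[0, 1]` the left side is increasing and the right side strictly decreasing, so there is at most
one solution. The difference of the two sides is `1 - n < 0` at `p = 0` and `k + 2 > 0` at `p = 1`,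
so the intermediate value theorem gives a solution in `(0, 1)`.
-/

/-- The equation for `φ_{k+3}` after division by `1 - p`. -/
lemma phi_eq_iff (k : ℕ) {p : ℝ} (hp : p < 1) :
    (1 - p) ^ (k + 2) + p ^ (k + 2) / ((k + 3 : ℕ) : ℝ) = 1 / ((k + 3 : ℕ) : ℝ) ↔
      (∑ i ∈ Finset.range (k + 2), p ^ i) - ((k + 3 : ℕ) : ℝ) * (1 - p) ^ (k + 1) = 0 := by
  have hn : ((k + 3 : ℕ) : ℝ) ≠ 0 := by positivity
  generalize ((k + 3 : ℕ) : ℝ) = N at hn ⊢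
  have hp' : 1 - p ≠ 0 := by linarith
  have hg := mul_neg_geom_sum p (k + 2)
  have key : (1 - p) * ((∑ i ∈ Finset.range (k + 2), p ^ i) - N * (1 - p) ^ (k + 1))
      = 1 - p ^ (k + 2) - N * (1 - p) ^ (k + 2) := by
    rw [mul_sub, hg]; ring
  have hdiv : (1 - p) ^ (k + 2) + p ^ (k + 2) / N - 1 / N
      = -(1 - p ^ (k + 2) - N * (1 - p) ^ (k + 2)) / N := by
    field_simp; ring
  rw [← sub_eq_zero, hdiv, ← key]
  simp [hn, hp']

lemma phi_reduced_strictMonoOn (k : ℕ) :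
    StrictMonoOn (fun p : ℝ => (∑ i ∈ Finset.range (k + 2), p ^ i)
      - ((k + 3 : ℕ) : ℝ) * (1 - p) ^ (k + 1)) (Set.Icc 0 1) := by
  intro p hp q hq hpq
  have h1 : ∑ i ∈ Finset.range (k + 2), p ^ i ≤ ∑ i ∈ Finset.range (k + 2), q ^ i :=
    Finset.sum_le_sum fun i _ => pow_le_pow_left₀ hp.1 hpq.le i
  have h2 : (1 - q) ^ (k + 1) < (1 - p) ^ (k + 1) :=
    pow_lt_pow_left₀ (by linarith) (by linarith [hq.2]) (Nat.succ_ne_zero k)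
  have h3 := mul_lt_mul_of_pos_left h2 (show (0 : ℝ) < ((k + 3 : ℕ) : ℝ) by positivity)
  dsimp only
  linarith

theorem stmt_3 (n : ℕ) (hn : 3 ≤ n) :
    ∃! p : ℝ, p ∈ Set.Ioo (0:ℝ) 1 ∧
      (1 - p) ^ (n - 1) + p ^ (n - 1) / n = 1 / n := by
  obtain ⟨k, rfl⟩ := Nat.exists_eq_add_of_le' hn
  rw [show k + 3 - 1 = k + 2 from rfl]
  obtain ⟨p, hp, hp0⟩ : (0 : ℝ) ∈ (fun p : ℝ => (∑ i ∈ Finset.range (k + 2), p ^ i)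
      - ((k + 3 : ℕ) : ℝ) * (1 - p) ^ (k + 1)) '' Set.Ioo 0 1 := by
    refine intermediate_value_Ioo zero_le_one (by fun_prop) ⟨?_, ?_⟩
    · have hk : (0 : ℝ) ≤ k := k.cast_nonneg
      simp [Finset.sum_range_succ']
      linarith
    · simp
      positivity
  refine ⟨p, ⟨hp, (phi_eq_iff k hp.2).2 hp0⟩, ?_⟩
  rintro q ⟨hq, hq0⟩
  exact (phi_reduced_strictMonoOn k).injOn (Set.Ioo_subset_Icc_self hq)
    (Set.Ioo_subset_Icc_self hp) (((phi_eq_iff k hq.2).1 hq0).trans hp0.symm)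
end

section
/- Let n ≥ 3 be an integer and let p ∈ (0,1) satisfy (1-p)^{n-1} + p^{n-1}/n = 1/n. Then p^{n-1} + (1/n)·(1-p)^{n-1} + ∑_{s=2}^{n-2} C(n-1, s-1)·(1/s)·(1-p)^{s-1}·p^{n-s} = 1/n, where C(n-1, s-1) denotes the binomial coefficient. -/
/-!
Write `q = 1 - p`. Since `C(n-1, s-1) / s = C(n, s) / n`, multiplying the sum by `n * q` turns it
into the terms `2 ≤ s ≤ n - 2` of the binomial expansion of `(q + p) ^ n = 1`. Restoring the four
missing terms, `n * q` times the left-hand side is `1 - p ^ n - n * p * q ^ (n - 1)`, and the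
equilibrium equation `n * q ^ (n - 1) = 1 - p ^ (n - 1)` reduces this to `1 - p = q`.
-/

theorem stmt_7 (n : ℕ) (hn : 3 ≤ n) (p : ℝ) (hp : p ∈ Set.Ioo (0:ℝ) 1)
    (heq : (1 - p) ^ (n - 1) + p ^ (n - 1) / n = 1 / n) :
    p ^ (n - 1) + (1 / n) * (1 - p) ^ (n - 1) +
      ∑ s ∈ Finset.Icc 2 (n - 2),
        (Nat.choose (n - 1) (s - 1) : ℝ) * (1 / s) * (1 - p) ^ (s - 1) * p ^ (n - s)
      = 1 / n := by
  obtain ⟨m, rfl⟩ := Nat.exists_eq_add_of_le' hn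
  obtain ⟨q, hq⟩ : ∃ q, q = 1 - p := ⟨_, rfl⟩
  have hq0 : q ≠ 0 := by
    have := hp.2
    rw [hq]
    linarith
  have hn0 : ((m + 3 : ℕ) : ℝ) ≠ 0 := by positivity
  rw [← hq] at heq ⊢
  have e1 : m + 3 - 1 = m + 2 := rfl
  have e2 : m + 3 - 2 = m + 1 := rfl
  rw [e1] at heq
  rw [e1, e2]
  have key : ((m + 3 : ℕ) : ℝ) * q * ∑ s ∈ Finset.Icc 2 (m + 1),
        (Nat.choose (m + 2) (s - 1) : ℝ) * (1 / s) * q ^ (s - 1) * p ^ (m + 3 - s)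
      = ∑ s ∈ Finset.Icc 2 (m + 1), q ^ s * p ^ (m + 3 - s) * (Nat.choose (m + 3) s : ℝ) := by
    rw [Finset.mul_sum]
    refine Finset.sum_congr rfl fun s hs => ?_
    obtain ⟨t, rfl⟩ := Nat.exists_eq_add_of_le' (show 1 ≤ s by grind)
    have hc : ((m + 3 : ℕ) : ℝ) * (Nat.choose (m + 2) t : ℝ)
        = (Nat.choose (m + 3) (t + 1) : ℝ) * ((t + 1 : ℕ) : ℝ) := by
      exact_mod_cast Nat.add_one_mul_choose_eq (m + 2) t
    have ht : ((t + 1 : ℕ) : ℝ) ≠ 0 := by positivity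
    rw [Nat.add_sub_cancel]
    calc _ = (((m + 3 : ℕ) : ℝ) * (Nat.choose (m + 2) t : ℝ)) * (1 / ((t + 1 : ℕ) : ℝ))
            * q ^ (t + 1) * p ^ (m + 3 - (t + 1)) := by ring
      _ = _ := by
        rw [hc]
        field_simp
  have hbin : 1 = p ^ (m + 3) + (m + 3 : ℕ) * q * p ^ (m + 2)
      + ∑ s ∈ Finset.Icc 2 (m + 1), q ^ s * p ^ (m + 3 - s) * (Nat.choose (m + 3) s : ℝ)
      + (m + 3 : ℕ) * q ^ (m + 2) * p + q ^ (m + 3) := by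
    have h := add_pow q p (m + 3)
    rw [show q + p = 1 by rw [hq]; ring, one_pow, Finset.sum_range_succ, Finset.sum_range_succ,
      ← Finset.sum_range_add_sum_Ico _ (show 2 ≤ m + 2 by omega), Finset.sum_range_succ,
      Finset.sum_range_one] at h
    have hI : Finset.Ico 2 (m + 2) = Finset.Icc 2 (m + 1) := by
      ext
      simp
      omega
    have hch : Nat.choose (m + 3) (m + 2) = m + 3 := Nat.choose_succ_self_right (m + 2)
    have e3 : m + 3 - (m + 2) = 1 := by omega
    rw [hI, hch, e3, e1] at h
    simp only [Nat.sub_self, Nat.sub_zero, Nat.choose_self, Nat.choose_zero_right,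
      Nat.choose_one_right, pow_zero, pow_one, Nat.cast_one] at h
    linear_combination h
  rw [← key] at hbin
  have heq' : ((m + 3 : ℕ) : ℝ) * q ^ (m + 2) = 1 - p ^ (m + 2) := by
    field_simp at heq
    linarith
  generalize (∑ s ∈ Finset.Icc 2 (m + 1),
        (Nat.choose (m + 2) (s - 1) : ℝ) * (1 / s) * q ^ (s - 1) * p ^ (m + 3 - s)) = S at *
  generalize ((m + 3 : ℕ) : ℝ) = N at *
  apply mul_left_cancel₀ (mul_ne_zero hn0 hq0)
  have h1 : N * (1 / N) = 1 := mul_one_div_cancel hn0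
  linear_combination (q * q ^ (m + 2) - q) * h1 - hbin - p * heq' - hq
end

section
/- Let n ≥ 3 be an integer. For every real number p ∈ [0,1], n·p·[(1-p)^{n-1} + p^{n-1}/n] + n·(1-p)·[p^{n-1} + (1-p)^{n-1}/n + ∑_{s=2}^{n-2} C(n-1, s-1)·(1/s)·(1-p)^{s-1}·p^{n-s}] = 1, where C(n-1, s-1) denotes the binomial coefficient. -/
/-!
Put `q = 1 - p`. The absorption identity `n * C(n-1, s-1) / s = C(n, s)` turns the sum, multiplied
by `n * q`, into the terms `2 ≤ s ≤ n - 2` of the binomial expansion of `(q + p) ^ n = 1`. The four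
remaining summands `p ^ n`, `n * q * p ^ (n-1)`, `n * p * q ^ (n-1)`, `q ^ n` are its terms
`s = 0, 1, n - 1, n`.
-/

theorem stmt_8 (n : ℕ) (hn : 3 ≤ n) (p : ℝ) (hp : p ∈ Set.Icc (0:ℝ) 1) :
    n * p * ((1 - p) ^ (n - 1) + p ^ (n - 1) / n) +
      n * (1 - p) * (p ^ (n - 1) + (1 - p) ^ (n - 1) / n +
        ∑ s ∈ Finset.Icc 2 (n - 2),
          (Nat.choose (n - 1) (s - 1) : ℝ) * (1 / s) * (1 - p) ^ (s - 1) * p ^ (n - s))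
      = 1 := by
  -- Writing `n = m + 3` removes the truncated subtractions.
  obtain ⟨m, rfl⟩ := Nat.exists_eq_add_of_le' hn
  have hbin : ((1 - p) + p) ^ (m + 3) = 1 := by simp
  generalize 1 - p = q at hbin ⊢
  have hset : Finset.Icc 2 (m + 3 - 2) = Finset.Ico 2 (m + 2) := by
    ext s; simp only [Finset.mem_Icc, Finset.mem_Ico]; omega
  have hm : ((m + 3 : ℕ) : ℝ) ≠ 0 := by positivity
  have hsum : ((m + 3 : ℕ) : ℝ) * q * ∑ s ∈ Finset.Icc 2 (m + 3 - 2),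
        (Nat.choose (m + 3 - 1) (s - 1) : ℝ) * (1 / s) * q ^ (s - 1) * p ^ (m + 3 - s)
      = ∑ s ∈ Finset.Ico 2 (m + 2), q ^ s * p ^ (m + 3 - s) * (Nat.choose (m + 3) s : ℝ) := by
    rw [hset, Finset.mul_sum]
    refine Finset.sum_congr rfl fun s hs => ?_
    obtain ⟨t, rfl⟩ := Nat.exists_eq_add_of_le' (show 1 ≤ s by grind)
    have habs : ((m + 3 : ℕ) : ℝ) * (Nat.choose (m + 2) t : ℝ)
        = (Nat.choose (m + 3) (t + 1) : ℝ) * ((t + 1 : ℕ) : ℝ) := by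
      exact_mod_cast Nat.add_one_mul_choose_eq (m + 2) t
    have ht : ((t + 1 : ℕ) : ℝ) ≠ 0 := by positivity
    simp only [show m + 3 - 1 = m + 2 from rfl, Nat.add_sub_cancel]
    field_simp
    linear_combination q ^ (t + 1) * p ^ (m + 3 - (t + 1)) * habs
  rw [add_pow, Finset.sum_range_succ, Finset.sum_range_succ,
    ← Finset.sum_range_add_sum_Ico _ (show 2 ≤ m + 2 by omega), ← hsum] at hbin
  have hc : Nat.choose (m + 3) (m + 2) = m + 3 := Nat.choose_succ_self_right (m + 2)
  have h1 : m + 3 - (m + 2) = 1 := by omega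
  simp only [Finset.sum_range_succ, Finset.sum_range_zero, hc, h1, Nat.sub_self, Nat.choose_self,
    Nat.choose_zero_right, Nat.choose_one_right, Nat.sub_zero, pow_zero, pow_one,
    show m + 3 - 1 = m + 2 from rfl, Nat.cast_one] at hbin ⊢
  have hp' : ((m + 3 : ℕ) : ℝ) * p * (p ^ (m + 2) / ((m + 3 : ℕ) : ℝ)) = p ^ (m + 3) := by
    field_simp; ring
  have hq' : ((m + 3 : ℕ) : ℝ) * q * (q ^ (m + 2) / ((m + 3 : ℕ) : ℝ)) = q ^ (m + 3) := by
    field_simp; ring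
  linear_combination hp' + hq' + hbin
end

section
/- Let a, b, c ∈ (0,1) be real numbers satisfying the three equations (1-b)(1-c)/(1 - bc) = bc/(1 - (1-b)(1-c)), (1-a)(1-c)/(1 - ac) = ac/(1 - (1-a)(1-c)), and (1-a)(1-b)/(1 - ab) = ab/(1 - (1-a)(1-b)). Then a = b = c = 1/2. -/
/-- With `P = xy` and `Q = (1-x)(1-y)` the hypothesis reads `Q(1-Q) = P(1-P)`, that is
`(Q-P)(1-P-Q) = 0`. Here `Q - P = 1 - x - y`, while `1 - P - Q = x(1-y) + y(1-x)` is positive.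
Applied to all three pairs, this gives a linear system whose only solution is `1/2`. -/
lemma add_eq_one_of_indifferent {x y : ℝ} (hx : x ∈ Set.Ioo (0:ℝ) 1) (hy : y ∈ Set.Ioo (0:ℝ) 1)
    (h : (1 - x) * (1 - y) / (1 - x * y) = x * y / (1 - (1 - x) * (1 - y))) :
    x + y = 1 := by
  obtain ⟨hx0, hx1⟩ := hx
  obtain ⟨hy0, hy1⟩ := hy
  have hp1 : 0 < x * (1 - y) := mul_pos hx0 (by linarith)
  have hp2 : 0 < y * (1 - x) := mul_pos hy0 (by linarith)
  have hd1 : 1 - x * y ≠ 0 := by nlinarith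
  have hd2 : 1 - (1 - x) * (1 - y) ≠ 0 := by nlinarith
  rw [div_eq_div_iff hd1 hd2] at h
  have hprod : (1 - x - y) * (x * (1 - y) + y * (1 - x)) = 0 := by linear_combination h
  rcases mul_eq_zero.mp hprod with h0 | h0 <;> linarith

theorem stmt_9 (a b c : ℝ)
    (ha : a ∈ Set.Ioo (0:ℝ) 1) (hb : b ∈ Set.Ioo (0:ℝ) 1) (hc : c ∈ Set.Ioo (0:ℝ) 1)
    (h1 : (1 - b) * (1 - c) / (1 - b * c) = b * c / (1 - (1 - b) * (1 - c)))
    (h2 : (1 - a) * (1 - c) / (1 - a * c) = a * c / (1 - (1 - a) * (1 - c)))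
    (h3 : (1 - a) * (1 - b) / (1 - a * b) = a * b / (1 - (1 - a) * (1 - b))) :
    a = 1/2 ∧ b = 1/2 ∧ c = 1/2 := by
  have hbc := add_eq_one_of_indifferent hb hc h1
  have hac := add_eq_one_of_indifferent ha hc h2
  have hab := add_eq_one_of_indifferent ha hb h3
  refine ⟨?_, ?_, ?_⟩ <;> linarith
end

section
/- For every integer n ≥ 4, the unique solution p = φ_n in (0,1) of the equation (1-p)^{n-1} + p^{n-1}/n = 1/n satisfies φ_n < 1/2. -/
/-!
Write `q = 1 - p` and `m = n - 1`, so the equation says `n * q ^ m = 1 - p ^ m`. If `1 / 2 ≤ p`,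
then `q ≤ 1 / 2`, and `n ≤ 2 ^ (n - 2)` (valid for `n ≥ 4`) gives `n * q ^ m ≤ q`; but
`1 - p ^ m ≥ 1 - p ^ 2 = q * (1 + p) > q`.
-/

theorem add_four_le_two_pow (k : ℕ) : k + 4 ≤ 2 ^ (k + 2) := by
  induction k with
  | zero => norm_num
  | succ k ih => rw [show k + 1 + 2 = (k + 2) + 1 by ring, pow_succ]; omega

theorem stmt_10 (n : ℕ) (hn : 4 ≤ n) (p : ℝ) (hp : p ∈ Set.Ioo (0:ℝ) 1)
    (heq : (1 - p) ^ (n - 1) + p ^ (n - 1) / n = 1 / n) :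
    p < 1/2 := by
  obtain ⟨h0, h1⟩ := hp
  by_contra! h
  obtain ⟨k, rfl⟩ : ∃ k, n = k + 4 := ⟨n - 4, by omega⟩
  rw [show k + 4 - 1 = (k + 2) + 1 by omega] at heq
  have hpos : (0 : ℝ) < ((k + 4 : ℕ) : ℝ) := by positivity
  have key : ((k + 4 : ℕ) : ℝ) * (1 - p) ^ (k + 2 + 1) = 1 - p ^ (k + 2 + 1) := by
    field_simp at heq
    linarith
  have hp2 : p ^ (k + 2 + 1) ≤ p ^ 2 := pow_le_pow_of_le_one h0.le h1.le (by omega)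
  have hq : (1 - p) ^ (k + 2) ≤ (1 / 2 : ℝ) ^ (k + 2) :=
    pow_le_pow_left₀ (by linarith) (by linarith) _
  have hk : ((k + 4 : ℕ) : ℝ) ≤ 2 ^ (k + 2) := by exact_mod_cast add_four_le_two_pow k
  have hle : ((k + 4 : ℕ) : ℝ) * (1 - p) ^ (k + 2) ≤ 1 :=
    calc ((k + 4 : ℕ) : ℝ) * (1 - p) ^ (k + 2) ≤ 2 ^ (k + 2) * (1 / 2 : ℝ) ^ (k + 2) :=
          mul_le_mul hk hq (pow_nonneg (by linarith) _) (by positivity)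
      _ = 1 := by rw [← mul_pow]; norm_num
  have hmul := mul_le_mul_of_nonneg_right hle (sub_nonneg.2 h1.le)
  rw [mul_assoc, ← pow_succ, key] at hmul
  nlinarith [mul_pos h0 (sub_pos.2 h1)]
end

section
/- For every integer n ≥ 3, φ_{n+1} < φ_n; that is, the symmetric equilibrium probability of choosing paper is strictly decreasing in the number of remaining players. -/
/-!
Put `m = n - 1`. Bernoulli's inequality `(1 - p) ^ m ≥ 1 - m p`, inserted in the equation for `p`,
gives `p > 1 / n`. Since `q ^ n ≤ q ^ 2`, the equation for `q` gives
`(n + 1) (1 - q) ^ n = 1 - q ^ n ≥ (1 - q) (1 + q)`, that is, `(n + 1) (1 - q) ^ m ≥ 1 + q`.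
If `p ≤ q`, then `1 + p ≤ 1 + q ≤ (n + 1) (1 - q) ^ m ≤ (n + 1) (1 - p) ^ m < (n + 1) / n < 1 + p`,
a contradiction.
-/

theorem stmt_11 (n : ℕ) (hn : 3 ≤ n) (p q : ℝ)
    (hp : p ∈ Set.Ioo (0:ℝ) 1) (hq : q ∈ Set.Ioo (0:ℝ) 1)
    (heqp : (1 - p) ^ (n - 1) + p ^ (n - 1) / n = 1 / n)
    (heqq : (1 - q) ^ n + q ^ n / (n + 1) = 1 / (n + 1 : ℝ)) :
    q < p := by
  obtain ⟨hp0, hp1⟩ := hp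
  obtain ⟨hq0, hq1⟩ := hq
  obtain ⟨m, rfl⟩ : ∃ m, n = m + 1 := ⟨n - 1, by omega⟩
  rw [Nat.add_sub_cancel] at heqp
  push_cast at heqp heqq
  have hm : (0 : ℝ) < m := by exact_mod_cast (by omega : 0 < m)
  have ep : (m + 1 : ℝ) * (1 - p) ^ m + p ^ m = 1 := by
    field_simp at heqp
    linarith
  have eq : (m + 2 : ℝ) * (1 - q) ^ (m + 1) + q ^ (m + 1) = 1 := by
    have h : (m : ℝ) + 1 + 1 ≠ 0 := by positivity
    field_simp at heqq
    linarith
  have hpm : 0 < p ^ m := pow_pos hp0 m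
  have bern : 1 - m * p ≤ (1 - p) ^ m := by
    have h := one_add_mul_le_pow (a := -p) (by linarith) m
    rw [← sub_eq_add_neg] at h
    linarith
  have hp_lower : 1 < (m + 1) * p := by
    have h : (m + 1 : ℝ) * (1 - m * p) < 1 := by nlinarith
    nlinarith
  by_contra! hpq
  have hq_pow : q ^ (m + 1) ≤ q ^ 2 := pow_le_pow_of_le_one hq0.le hq1.le (by omega)
  have hq_lower : 1 + q ≤ (m + 2) * (1 - q) ^ m := by
    refine le_of_mul_le_mul_right ?_ (sub_pos.2 hq1)
    rw [mul_assoc, ← pow_succ]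
    linarith
  have hanti : (1 - q) ^ m ≤ (1 - p) ^ m := pow_le_pow_left₀ (by linarith) (by linarith) m
  have h1 : 1 + p ≤ (m + 2) * (1 - p) ^ m :=
    calc 1 + p ≤ 1 + q := by linarith
      _ ≤ (m + 2) * (1 - q) ^ m := hq_lower
      _ ≤ (m + 2) * (1 - p) ^ m := by gcongr
  -- Both sides of `h1` are multiplied by `m + 1` to compare with `ep`.
  have h2 : (m + 1) * (1 + p) ≤ (m + 2) * ((m + 1 : ℝ) * (1 - p) ^ m) := by
    rw [mul_left_comm (m + 2 : ℝ)]
    gcongr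
  have h3 : (m + 2 : ℝ) * ((m + 1 : ℝ) * (1 - p) ^ m) < (m + 2) * 1 := by
    gcongr
    linarith
  linarith
end

section
/- The sequence (φ_n)_{n ≥ 3} converges to 0 as n → ∞. -/
/-! Put `q = 1 - φ n`. The equation reads `n * q ^ (n - 1) = 1 - φ n ^ (n - 1)`, and the right-hand
side is at least `1 - φ n = q`; dividing by `q > 0` gives `1 ≤ n * q ^ (n - 2)`. If `φ n ≥ ε`, then
`q ≤ 1 - ε`, which is impossible for large `n` because `n * r ^ n → 0` for `0 ≤ r < 1`. -/

/-- This bound is what keeps solutions away from `1`, where `p ^ (n - 1)` need not be small. -/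
lemma one_le_mul_pow_of_eq {n : ℕ} (hn : 3 ≤ n) {p : ℝ} (hp : p ∈ Set.Ioo (0:ℝ) 1)
    (h : (1 - p) ^ (n - 1) + p ^ (n - 1) / n = 1 / n) : 1 ≤ n * (1 - p) ^ (n - 2) := by
  obtain ⟨h0, h1⟩ := hp
  have hn0 : (0:ℝ) < n := by positivity
  have hle : p ^ (n - 1) ≤ p := pow_le_of_le_one h0.le h1.le (by omega)
  have hs : (1 - p) ^ (n - 1) = (1 - p) ^ (n - 2) * (1 - p) := by
    rw [← pow_succ]; congr 1; omega
  have hmul : n * (1 - p) ^ (n - 1) = 1 - p ^ (n - 1) := by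
    field_simp at h
    linarith
  have hq : 0 < 1 - p := by linarith
  refine le_of_mul_le_mul_right ?_ hq
  rw [hs] at hmul
  linarith

theorem stmt_12 (φ : ℕ → ℝ)
    (hφ : ∀ n : ℕ, 3 ≤ n → φ n ∈ Set.Ioo (0:ℝ) 1 ∧
      (1 - φ n) ^ (n - 1) + (φ n) ^ (n - 1) / n = 1 / n) :
    Filter.Tendsto φ Filter.atTop (nhds 0) := by
  rw [Metric.tendsto_atTop']
  intro ε hε
  -- Capping `ε` at `1 / 2` makes `r = 1 - min ε (1 / 2)` positive, hence so is the threshold `r ^ 2`.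
  obtain ⟨r, hr0, hr1, hr⟩ : ∃ r : ℝ, 0 < r ∧ r < 1 ∧ 1 - ε ≤ r :=
    ⟨1 - min ε (1 / 2), by linarith [min_le_right ε (1 / 2)],
      by linarith [lt_min hε (by norm_num : (0:ℝ) < 1 / 2)], by linarith [min_le_left ε (1 / 2)]⟩
  have hev := (tendsto_self_mul_const_pow_of_lt_one hr0.le hr1).eventually_lt_const
    (by positivity : (0:ℝ) < r ^ 2)
  obtain ⟨N, hN⟩ := Filter.eventually_atTop.1 hev
  refine ⟨max N 3, fun n hn => ?_⟩
  have hn3 : 3 ≤ n := (le_max_right N 3).trans hn.le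
  obtain ⟨hp, he⟩ := hφ n hn3
  have hlt := hN n ((le_max_left N 3).trans hn.le)
  have hone := one_le_mul_pow_of_eq hn3 hp he
  rw [Real.dist_eq, sub_zero, abs_of_pos hp.1]
  by_contra! hge
  have hpow : (1 - φ n) ^ (n - 2) ≤ r ^ (n - 2) :=
    pow_le_pow_left₀ (by linarith [hp.2]) (by linarith) _
  have hsplit : r ^ n = r ^ (n - 2) * r ^ 2 := by
    rw [← pow_add]; congr 1; omega
  have hone' : 1 ≤ n * r ^ (n - 2) :=
    hone.trans (mul_le_mul_of_nonneg_left hpow n.cast_nonneg)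
  have hcontra : r ^ 2 ≤ n * r ^ n := by
    rw [hsplit, ← mul_assoc]
    exact le_mul_of_one_le_left (by positivity) hone'
  linarith
end

section
/- For every integer n ≥ 3, the unique solution p = φ_n in (0,1) of (1-p)^{n-1} + p^{n-1}/n = 1/n satisfies (1-φ_n)^{n-2} ≥ 1/n, and consequently φ_n ≤ 1 - n^{-1/(n-2)}. -/
/-!
The equation reads `n (1 - p) ^ (n - 1) = 1 - p ^ (n - 1)`. Since `0 < p < 1` and `n - 1 ≥ 1`, the
right side is at least `1 - p`, and cancelling the positive factor `1 - p` gives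
`(1 - p) ^ (n - 2) ≥ 1 / n`. Taking `(n - 2)`-th roots yields the bound on `p`. The proof writes
`n = m + 2` to avoid truncated subtraction.
-/

theorem stmt_13 (n : ℕ) (hn : 3 ≤ n) (p : ℝ) (hp : p ∈ Set.Ioo (0:ℝ) 1)
    (heq : (1 - p) ^ (n - 1) + p ^ (n - 1) / n = 1 / n) :
    (1 - p) ^ (n - 2) ≥ 1 / n ∧ p ≤ 1 - (n : ℝ) ^ (-(1 / ((n : ℝ) - 2))) := by
  obtain ⟨hp0, hp1⟩ := hp
  obtain ⟨m, rfl⟩ : ∃ m, n = m + 2 := ⟨n - 2, by omega⟩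
  have hm : m ≠ 0 := by omega
  have hN : (0 : ℝ) < ((m + 2 : ℕ) : ℝ) := by positivity
  have hcast : ((m + 2 : ℕ) : ℝ) - 2 = m := by push_cast; ring
  rw [hcast]
  rw [show m + 2 - 1 = m + 1 by omega] at heq
  rw [show m + 2 - 2 = m by omega]
  generalize ((m + 2 : ℕ) : ℝ) = N at *
  have hpow : p ^ (m + 1) ≤ p := pow_le_of_le_one hp0.le hp1.le (by omega)
  have key : 1 / N ≤ (1 - p) ^ m := by
    have hle : (1 / N) * (1 - p) ≤ (1 - p) ^ m * (1 - p) := by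
      rw [← pow_succ, eq_sub_of_add_eq heq, ← sub_div, one_div_mul_eq_div]
      gcongr
    exact le_of_mul_le_mul_right hle (by linarith)
  refine ⟨key, ?_⟩
  have hroot : N ^ (-(1 / (m : ℝ))) ≤ 1 - p := by
    calc N ^ (-(1 / (m : ℝ))) = (1 / N) ^ ((m : ℝ)⁻¹) := by
          rw [Real.rpow_neg hN.le, one_div, one_div, Real.inv_rpow hN.le]
      _ ≤ ((1 - p) ^ m) ^ ((m : ℝ)⁻¹) := by gcongr
      _ = 1 - p := Real.pow_rpow_inv_natCast (by linarith) hm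
  linarith
end
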